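/- Reproducing identity for the defining function: let d ≥ 2, γ ∈ (0,1), let D ⊂ ℝ^d be a bounded C^{1+γ} domain with defining function Φ (so Φ is C¹ with γ-Hölder gradient, D = {Φ<0}, ∂D = {Φ=0}). Then for every x ∈ ℝ^d, χ_D(x) Φ(x) = ∫_D ∇N(x-y) · ∇Φ(y) dy, where the integral converges absolutely. -/

import Mathlib

open MeasureTheory Metric Set
open scoped RealInnerProductSpace

noncomputable def sphereVol (d : ℕ) : ℝ :=
  d * (volume (Metric.ball (0 : EuclideanSpace ℝ (Fin d)) 1)).toReal

noncomputable def gradN (d : ℕ) (y : EuclideanSpace ℝ (Fin d)) : EuclideanSpace ℝ (Fin d) :=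
  (sphereVol d * ‖y‖ ^ d)⁻¹ • y

noncomputable def hessN (d : ℕ) (z w : EuclideanSpace ℝ (Fin d)) : EuclideanSpace ℝ (Fin d) :=
  (sphereVol d)⁻¹ • ((‖z‖ ^ d)⁻¹ • w - ((d : ℝ) * (‖z‖ ^ (d + 2))⁻¹ * ⟪z, w⟫) • z)

/-- `Φ` is a defining function of class `C^{1+γ}` for the set `D`. -/
def IsDefining (d : ℕ) (γ : ℝ) (D : Set (EuclideanSpace ℝ (Fin d)))
    (Φ : EuclideanSpace ℝ (Fin d) → ℝ) : Prop :=
  ContDiff ℝ 1 Φ ∧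
  (∃ K : ℝ, ∀ x y, ‖gradient Φ x - gradient Φ y‖ ≤ K * ‖x - y‖ ^ γ) ∧
  D = {x | Φ x < 0} ∧
  frontier D = {x | Φ x = 0} ∧
  ∀ x ∈ frontier D, gradient Φ x ≠ 0

/-- `D` is a bounded domain of class `C^{1+γ}`. -/
def IsC1Domain (d : ℕ) (γ : ℝ) (D : Set (EuclideanSpace ℝ (Fin d))) : Prop :=
  IsOpen D ∧ Bornology.IsBounded D ∧ ∃ Φ, IsDefining d γ D Φ

/-! The negative part `min Φ 0` is compactly supported and Lipschitz, and its gradient is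
`χ_D ∇Φ`: at a point where `Φ ≥ 0` it has a global maximum. So the claim is the representation
`u = ∇N * ∇u` of a compactly supported Lipschitz function `u`. In polar coordinates around `x` the
Jacobian cancels the singularity of `∇N`, and `∫ ∇N(z) · ∇u(x - z) dz` becomes the mean over unit
vectors `θ` of `-∫₀^∞ (d/dr) u(x - rθ) dr = u x`. -/

section PolarCoordinates

variable {E : Type*} [NormedAddCommGroup E] [NormedSpace ℝ E] [FiniteDimensional ℝ E]
  [Nontrivial E] [MeasurableSpace E] [BorelSpace E] (μ : Measure E) [μ.IsAddHaarMeasure]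

theorem measurePreserving_smul_toSphere :
    MeasurePreserving (fun p : sphere (0 : E) 1 × Ioi (0 : ℝ) => (p.2 : ℝ) • (p.1 : E))
      (μ.toSphere.prod (.volumeIoiPow (Module.finrank ℝ E - 1))) μ := by
  have hpolar := μ.measurePreserving_homeomorphUnitSphereProd.symm
    (homeomorphUnitSphereProd E).toMeasurableEquiv
  have hincl := measurePreserving_subtype_coe (μa := μ) (measurableSet_singleton (0 : E)).compl
  rw [restrict_compl_singleton] at hincl
  exact hincl.comp hpolar

theorem ae_toSphere_ae_Ioi_of_ae {p : E → Prop} (hp : ∀ᵐ y ∂μ, p y) :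
    ∀ᵐ θ : sphere (0 : E) 1 ∂μ.toSphere, ∀ᵐ r : ℝ ∂volume.restrict (Ioi 0), p (r • (θ : E)) := by
  have hprod := (measurePreserving_smul_toSphere μ).quasiMeasurePreserving.ae hp
  filter_upwards [Measure.ae_ae_of_ae_prod hprod] with θ hθ
  rw [ae_restrict_iff_subtype measurableSet_Ioi]
  rw [Measure.volumeIoiPow, ae_withDensity_iff (by fun_prop)] at hθ
  filter_upwards [hθ] with r hr
  exact hr (ENNReal.ofReal_pos.2 (pow_pos r.2 _)).ne'

theorem integral_eq_integral_toSphere_integral_Ioi {F : Type*} [NormedAddCommGroup F]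
    [NormedSpace ℝ F] {f : E → F} (hf : Integrable f μ) :
    ∫ y, f y ∂μ = ∫ θ : sphere (0 : E) 1, (∫ r in Ioi (0 : ℝ),
      r ^ (Module.finrank ℝ E - 1) • f (r • (θ : E))) ∂μ.toSphere := by
  have hpolar := measurePreserving_smul_toSphere μ
  calc
    ∫ y, f y ∂μ
      = ∫ p : sphere (0 : E) 1 × Ioi (0 : ℝ), f ((p.2 : ℝ) • (p.1 : E))
          ∂μ.toSphere.prod (.volumeIoiPow (Module.finrank ℝ E - 1)) := by
      rw [← integral_map hpolar.aemeasurable (by simpa [hpolar.map_eq] using hf.1), hpolar.map_eq]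
    _ = ∫ θ : sphere (0 : E) 1, (∫ r : Ioi (0 : ℝ), f ((r : ℝ) • (θ : E))
          ∂.volumeIoiPow (Module.finrank ℝ E - 1)) ∂μ.toSphere :=
      integral_prod _ ((hpolar.integrable_comp hf.1).2 hf)
    _ = _ := by
      congr 1 with θ
      rw [Measure.volumeIoiPow, integral_withDensity_eq_integral_toReal_smul (by fun_prop)
          (by simp),
        ← integral_subtype_comap measurableSet_Ioi]
      congr 1 with r
      rw [ENNReal.toReal_ofReal (pow_nonneg r.2.le _)]

end PolarCoordinates

section LipschitzFunctions

theorem exists_lipschitzWith_of_hasCompactSupport {X F : Type*} [PseudoMetricSpace X]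
    [ProperSpace X] [NormedAddCommGroup F] {f : X → F} (hf : LocallyLipschitz f)
    (hs : HasCompactSupport f) : ∃ K, LipschitzWith K f := by
  obtain ⟨C, hC⟩ := hf.locallyLipschitzOn.exists_lipschitzOnWith_of_compact
    (hs.isCompact.cthickening (r := 1))
  obtain ⟨M, hM⟩ := hs.exists_bound_of_continuous hf.continuous
  have key : ∀ x ∈ tsupport f, ∀ y, dist (f x) (f y) ≤ max C M.toNNReal * dist x y := by
    intro x hx y
    by_cases hy : y ∈ cthickening 1 (tsupport f)
    · have hxy := hC.dist_le_mul x (self_subset_cthickening _ hx) y hy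
      exact hxy.trans (by gcongr; exact le_max_left _ _)
    · have hfy : f y = 0 := image_eq_zero_of_notMem_tsupport
        fun h => hy (self_subset_cthickening _ h)
      have hdist : 1 ≤ dist x y := by
        contrapose! hy
        exact mem_cthickening_of_dist_le y x 1 _ hx (dist_comm x y ▸ hy.le)
      calc dist (f x) (f y) = ‖f x‖ := by rw [hfy, dist_zero_right]
        _ ≤ M.toNNReal * 1 := by simpa using (hM x).trans (Real.le_coe_toNNReal M)
        _ ≤ max C M.toNNReal * dist x y := by gcongr; exact le_max_right _ _
  refine ⟨max C M.toNNReal, .of_dist_le_mul fun x y => ?_⟩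
  by_cases hx : x ∈ tsupport f
  · exact key x hx y
  by_cases hy : y ∈ tsupport f
  · simpa only [dist_comm] using key y hy x
  · rw [image_eq_zero_of_notMem_tsupport hx, image_eq_zero_of_notMem_tsupport hy, dist_self]
    positivity

theorem integral_Ioi_deriv_of_locallyLipschitz {g : ℝ → ℝ} (hg : LocallyLipschitz g)
    (hs : HasCompactSupport g) (a : ℝ) : ∫ r in Ioi a, deriv g r = -g a := by
  obtain ⟨c, hc⟩ := hs.isCompact.bddAbove
  have hzero : ∀ r, c < r → r ∉ tsupport g := fun r hr h => (hc h).not_gt hr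
  set b := max a c + 1
  have hab : a ≤ b := (le_max_left a c).trans (lt_add_one _).le
  have hcb : c < b := (le_max_right a c).trans_lt (lt_add_one _)
  obtain ⟨K, hK⟩ := hg.locallyLipschitzOn.exists_lipschitzOnWith_of_compact
    (isCompact_uIcc (a := a) (b := b))
  calc
    ∫ r in Ioi a, deriv g r = ∫ r in Ioc a b, deriv g r := by
      refine setIntegral_eq_of_subset_of_forall_sdiff_eq_zero measurableSet_Ioi Ioc_subset_Ioi_self
        fun r hr => image_eq_zero_of_notMem_tsupport fun h => ?_
      have hbr : b < r := not_le.1 fun hrb => hr.2 ⟨hr.1, hrb⟩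
      exact hzero r (hcb.trans hbr) (tsupport_deriv_subset h)
    _ = g b - g a := by
      rw [← intervalIntegral.integral_of_le hab,
        hK.absolutelyContinuousOnInterval.integral_deriv_eq_sub]
    _ = -g a := by rw [image_eq_zero_of_notMem_tsupport (hzero b hcb), zero_sub]

end LipschitzFunctions

section Gradient

variable {E : Type*} [NormedAddCommGroup E] [InnerProductSpace ℝ E] [CompleteSpace E]

theorem measurable_gradient [MeasurableSpace E] [BorelSpace E] (u : E → ℝ) :
    Measurable (gradient u) :=
  (InnerProductSpace.toDual ℝ E).symm.continuous.measurable.comp (measurable_fderiv ℝ u)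

theorem norm_gradient_le_of_lipschitz {K : NNReal} {u : E → ℝ} (hu : LipschitzWith K u) (y : E) :
    ‖gradient u y‖ ≤ K := by
  rw [gradient, LinearIsometryEquiv.norm_map]
  exact norm_fderiv_le_of_lipschitz ℝ hu

theorem hasCompactSupport_gradient {u : E → ℝ} (hs : HasCompactSupport u) :
    HasCompactSupport (gradient u) :=
  (hs.fderiv ℝ).comp_left (map_zero _)

theorem min_zero_eq_indicator {α : Type*} (f : α → ℝ) :
    (fun y => min (f y) 0) = {y | f y < 0}.indicator f := by
  ext y
  by_cases hy : y ∈ {y | f y < 0}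
  · rw [indicator_of_mem hy, min_eq_left (le_of_lt hy)]
  · rw [indicator_of_notMem hy, min_eq_right (not_lt.1 hy)]

theorem gradient_min_zero {Φ : E → ℝ} (hΦ : Continuous Φ) :
    gradient (fun y => min (Φ y) 0) = {y | Φ y < 0}.indicator (gradient Φ) := by
  ext1 y
  by_cases hy : y ∈ {y | Φ y < 0}
  · have hmin : (fun z => min (Φ z) 0) =ᶠ[nhds y] Φ := by
      filter_upwards [hΦ.continuousAt.eventually_lt continuousAt_const hy] with z hz
      exact min_eq_left hz.le
    rw [indicator_of_mem hy, gradient, hmin.fderiv_eq, gradient]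
  · have hy' : 0 ≤ Φ y := not_lt.1 hy
    have hmax : IsLocalMax (fun z => min (Φ z) 0) y := .of_forall fun z => by
      simp only [min_eq_right hy', min_le_right]
    rw [indicator_of_notMem hy, gradient, hmax.fderiv_eq_zero, map_zero]

theorem integral_Ioi_inner_gradient_ray {u : E → ℝ} (hu : LocallyLipschitz u)
    (hs : HasCompactSupport u) {x θ : E} (hθ : θ ≠ 0)
    (hdiff : ∀ᵐ r : ℝ ∂volume.restrict (Ioi 0), DifferentiableAt ℝ u (x - r • θ)) :
    ∫ r in Ioi (0 : ℝ), ⟪θ, gradient u (x - r • θ)⟫ = u x := by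
  set g : ℝ → ℝ := fun r => u (x - r • θ)
  have hline : LocallyLipschitz fun r : ℝ => x - r • θ :=
    ContDiff.locallyLipschitz (𝕂 := ℝ) (by fun_prop)
  have hg : LocallyLipschitz g := hu.comp hline
  have hgs : HasCompactSupport g := hs.comp_isClosedEmbedding
    ((Homeomorph.subLeft x).isClosedEmbedding.comp (isClosedEmbedding_smul_left hθ))
  have hderiv : ∀ᵐ r : ℝ ∂volume.restrict (Ioi 0),
      ⟪θ, gradient u (x - r • θ)⟫ = -deriv g r := by
    filter_upwards [hdiff] with r hr
    have hray : HasDerivAt (fun r : ℝ => x - r • θ) (-θ) r := by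
      simpa using ((hasDerivAt_id r).smul_const θ).const_sub x
    have hgr : HasDerivAt g (fderiv ℝ u (x - r • θ) (-θ)) r :=
      hr.hasFDerivAt.comp_hasDerivAt r hray
    rw [hgr.deriv, map_neg, neg_neg, real_inner_comm, inner_gradient_left]
  rw [integral_congr_ae hderiv, integral_neg,
    integral_Ioi_deriv_of_locallyLipschitz hg hgs, neg_neg]
  simp only [g, zero_smul, sub_zero]

theorem ae_toSphere_integral_Ioi_inner_gradient_ray [FiniteDimensional ℝ E] [Nontrivial E]
    [MeasurableSpace E] [BorelSpace E] (μ : Measure E) [μ.IsAddHaarMeasure] {K : NNReal}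
    {u : E → ℝ} (hu : LipschitzWith K u) (hs : HasCompactSupport u) (x : E) :
    ∀ᵐ θ : sphere (0 : E) 1 ∂μ.toSphere,
      ∫ r in Ioi (0 : ℝ), ⟪(θ : E), gradient u (x - r • (θ : E))⟫ = u x := by
  have hdiff : ∀ᵐ z ∂μ, DifferentiableAt ℝ u (x - z) :=
    (μ.measurePreserving_sub_left x).quasiMeasurePreserving.ae hu.ae_differentiableAt
  filter_upwards [ae_toSphere_ae_Ioi_of_ae μ hdiff] with θ hθ
  exact integral_Ioi_inner_gradient_ray hu.locallyLipschitz hs (ne_zero_of_mem_unit_sphere θ) hθ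

end Gradient

section InnerConvolution

theorem integrable_inner_sub_left {E : Type*} [NormedAddCommGroup E] [InnerProductSpace ℝ E]
    [MeasurableSpace E] [BorelSpace E] [SecondCountableTopology E] {μ : Measure E} {k V : E → E}
    (hk : LocallyIntegrable k μ) (hV : Measurable V) (hs : HasCompactSupport V) {C : ℝ}
    (hC : ∀ y, ‖V y‖ ≤ C) (x : E) : Integrable (fun z => ⟪k z, V (x - z)⟫) μ := by
  set S := (fun z => x - z) ⁻¹' tsupport V
  have hS : IsCompact S := (Homeomorph.subLeft x).isCompact_preimage.2 hs
  have hsupp : Function.support (fun z => ⟪k z, V (x - z)⟫) ⊆ S := fun z hz =>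
    subset_tsupport V fun hVz => hz (by simp only [hVz, inner_zero_right])
  rw [← integrableOn_iff_integrable_of_support_subset hsupp]
  have hkS := hk.integrableOn_isCompact hS
  refine (hkS.norm.mul_const C).mono'
    (hkS.1.inner (hV.comp (by fun_prop)).aestronglyMeasurable) (.of_forall fun z => ?_)
  calc ‖⟪k z, V (x - z)⟫‖ ≤ ‖k z‖ * ‖V (x - z)‖ := norm_inner_le_norm _ _
    _ ≤ ‖k z‖ * C := by gcongr; exact hC _

end InnerConvolution

section NewtonianKernel

variable {d : ℕ}

theorem sphereVol_eq_toSphere_real_univ (d : ℕ) :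
    sphereVol d = (volume : Measure (EuclideanSpace ℝ (Fin d))).toSphere.real univ := by
  rw [Measure.toSphere_real_apply_univ, finrank_euclideanSpace_fin, sphereVol, Measure.real]

theorem sphereVol_pos (hd : d ≠ 0) : 0 < sphereVol d :=
  mul_pos (Nat.cast_pos.2 (Nat.pos_of_ne_zero hd))
    (ENNReal.toReal_pos (measure_ball_pos _ _ one_pos).ne' measure_ball_lt_top.ne)

theorem measurable_gradN (d : ℕ) : Measurable (gradN d) := by
  unfold gradN
  fun_prop

theorem pow_smul_gradN_smul (hd : d ≠ 0) {θ : EuclideanSpace ℝ (Fin d)} (hθ : ‖θ‖ = 1) {r : ℝ}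
    (hr : 0 < r) : r ^ (d - 1) • gradN d (r • θ) = (sphereVol d)⁻¹ • θ := by
  have hpow : r ^ (d - 1) * r = r ^ d := pow_sub_one_mul hd r
  rw [gradN, norm_smul, hθ, mul_one, Real.norm_of_nonneg hr.le, smul_smul, smul_smul, ← hpow]
  congr 1
  field_simp

theorem norm_gradN (z : EuclideanSpace ℝ (Fin d)) :
    ‖gradN d z‖ = (sphereVol d * ‖z‖ ^ d)⁻¹ * ‖z‖ := by
  have : 0 ≤ sphereVol d := by unfold sphereVol; positivity
  rw [gradN, norm_smul, Real.norm_of_nonneg (by positivity)]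

theorem locallyIntegrable_gradN (hd : d ≠ 0) :
    LocallyIntegrable (gradN d) (volume : Measure (EuclideanSpace ℝ (Fin d))) := by
  have : NeZero d := ⟨hd⟩
  have hball (R : ℝ) : IntegrableOn (gradN d) (ball 0 R) := by
    refine (integrable_norm_iff (measurable_gradN d).aestronglyMeasurable).1 ?_
    simp only [norm_gradN]
    refine (integrableOn_fun_norm_addHaar (f := fun r => (sphereVol d * r ^ d)⁻¹ * r) volume).2 ?_
    rw [finrank_euclideanSpace_fin]
    have hconst : IntegrableOn (fun _ => (sphereVol d)⁻¹) (Ioo (0 : ℝ) R) :=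
      integrableOn_const measure_Ioo_lt_top.ne
    refine hconst.congr_fun (fun r hr => ?_) measurableSet_Ioo
    have hr0 : r ≠ 0 := hr.1.ne'
    rw [smul_eq_mul, ← pow_sub_one_mul hd r]
    field_simp
  exact fun z => ⟨ball 0 (‖z‖ + 1), isOpen_ball.mem_nhds (by simp), hball _⟩

theorem integrable_inner_gradN_gradient (hd : d ≠ 0) {K : NNReal}
    {u : EuclideanSpace ℝ (Fin d) → ℝ} (hu : LipschitzWith K u) (hs : HasCompactSupport u)
    (x : EuclideanSpace ℝ (Fin d)) :
    Integrable (fun z => ⟪gradN d z, gradient u (x - z)⟫) :=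
  integrable_inner_sub_left (locallyIntegrable_gradN hd) (measurable_gradient u)
    (hasCompactSupport_gradient hs) (norm_gradient_le_of_lipschitz hu) x

theorem integral_inner_gradN_gradient (hd : d ≠ 0) {K : NNReal}
    {u : EuclideanSpace ℝ (Fin d) → ℝ} (hu : LipschitzWith K u) (hs : HasCompactSupport u)
    (x : EuclideanSpace ℝ (Fin d)) :
    ∫ z, ⟪gradN d z, gradient u (x - z)⟫ = u x := by
  have : NeZero d := ⟨hd⟩
  have hradial : ∀ θ : sphere (0 : EuclideanSpace ℝ (Fin d)) 1, ∀ r ∈ Ioi (0 : ℝ),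
      r ^ (d - 1) • ⟪gradN d (r • (θ : EuclideanSpace ℝ (Fin d))), gradient u (x - r • θ)⟫ =
        (sphereVol d)⁻¹ * ⟪(θ : EuclideanSpace ℝ (Fin d)), gradient u (x - r • θ)⟫ := by
    intro θ r hr
    rw [smul_eq_mul, ← real_inner_smul_left, ← real_inner_smul_left,
      pow_smul_gradN_smul hd (norm_eq_of_mem_sphere θ) hr]
  rw [integral_eq_integral_toSphere_integral_Ioi volume
    (integrable_inner_gradN_gradient hd hu hs x), finrank_euclideanSpace_fin]
  calc
    _ = ∫ _ : sphere (0 : EuclideanSpace ℝ (Fin d)) 1, (sphereVol d)⁻¹ * u x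
          ∂(volume : Measure (EuclideanSpace ℝ (Fin d))).toSphere := by
      refine integral_congr_ae ?_
      filter_upwards [ae_toSphere_integral_Ioi_inner_gradient_ray volume hu hs x] with θ hθ
      rw [setIntegral_congr_fun measurableSet_Ioi (hradial θ), integral_const_mul, hθ]
    _ = u x := by
      rw [integral_const, ← sphereVol_eq_toSphere_real_univ, smul_eq_mul,
        mul_inv_cancel_left₀ (sphereVol_pos hd).ne']

theorem integrable_inner_gradN_sub_gradient (hd : d ≠ 0) {K : NNReal}
    {u : EuclideanSpace ℝ (Fin d) → ℝ} (hu : LipschitzWith K u) (hs : HasCompactSupport u)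
    (x : EuclideanSpace ℝ (Fin d)) :
    Integrable (fun y => ⟪gradN d (x - y), gradient u y⟫) := by
  simpa only [sub_sub_cancel] using (integrable_inner_gradN_gradient hd hu hs x).comp_sub_left x

theorem integral_inner_gradN_sub_gradient (hd : d ≠ 0) {K : NNReal}
    {u : EuclideanSpace ℝ (Fin d) → ℝ} (hu : LipschitzWith K u) (hs : HasCompactSupport u)
    (x : EuclideanSpace ℝ (Fin d)) :
    ∫ y, ⟪gradN d (x - y), gradient u y⟫ = u x := by
  rw [← integral_inner_gradN_gradient hd hu hs x,
    ← integral_sub_left_eq_self (fun z => ⟪gradN d z, gradient u (x - z)⟫) volume x]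
  simp only [sub_sub_cancel]

end NewtonianKernel

theorem reproducing_identity_defining_function_general {d : ℕ} (hd : d ≠ 0)
    {Φ : EuclideanSpace ℝ (Fin d) → ℝ} (hΦ : LocallyLipschitz Φ)
    (hb : Bornology.IsBounded {y | Φ y < 0}) (x : EuclideanSpace ℝ (Fin d)) :
    IntegrableOn (fun y => ⟪gradN d (x - y), gradient Φ y⟫) {y | Φ y < 0} ∧
    {y | Φ y < 0}.indicator Φ x =
      ∫ y in {y | Φ y < 0}, ⟪gradN d (x - y), gradient Φ y⟫ := by
  set D := {y | Φ y < 0}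
  set u : EuclideanSpace ℝ (Fin d) → ℝ := fun y => min (Φ y) 0
  have hD : MeasurableSet D := measurableSet_lt hΦ.continuous.measurable measurable_const
  have hu : u = D.indicator Φ := min_zero_eq_indicator Φ
  have hs : HasCompactSupport u := .of_support_subset_isCompact hb.isCompact_closure <| by
    rw [hu]
    exact support_indicator_subset.trans subset_closure
  obtain ⟨K, hK⟩ := exists_lipschitzWith_of_hasCompactSupport (hΦ.min_const 0) hs
  have hgrad : D.indicator (fun y => ⟪gradN d (x - y), gradient Φ y⟫) =
      fun y => ⟪gradN d (x - y), gradient u y⟫ := by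
    ext y
    rw [gradient_min_zero hΦ.continuous]
    by_cases hy : y ∈ D
    · simp only [D, indicator_of_mem hy]
    · simp only [D, indicator_of_notMem hy, inner_zero_right]
  constructor
  · rw [← integrable_indicator_iff hD, hgrad]
    exact integrable_inner_gradN_sub_gradient hd hK hs x
  · rw [← integral_indicator hD, hgrad, integral_inner_gradN_sub_gradient hd hK hs, ← hu]

/-- Lemma (reproducing identity): `χ_D Φ = ∇N * (χ_D ∇Φ)`. -/
theorem reproducing_identity_defining_function
    (d : ℕ) (hd : 2 ≤ d) (γ : ℝ) (hγ : γ ∈ Set.Ioo (0:ℝ) 1)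
    (D : Set (EuclideanSpace ℝ (Fin d))) (Φ : EuclideanSpace ℝ (Fin d) → ℝ)
    (hDo : IsOpen D) (hDb : Bornology.IsBounded D) (hΦ : IsDefining d γ D Φ)
    (x : EuclideanSpace ℝ (Fin d)) :
    IntegrableOn (fun y => ⟪gradN d (x - y), gradient Φ y⟫) D volume ∧
    Set.indicator D Φ x = ∫ y in D, ⟪gradN d (x - y), gradient Φ y⟫ := by
  obtain ⟨hC, -, rfl, -⟩ := hΦ
  exact reproducing_identity_defining_function_general (by omega) hC.locallyLipschitz hDb x
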